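/- arXiv:2506.15586 — 4 statements merged into one kernel-verified Lean document; each statement's English description precedes it below -/
import Mathlib

section
/- For every m ≥ 1, the Cesàro average satisfies the closed form (1/m) Σ_{k=0}^{m−1} ψ_{y,k} = K_yx ψ_x + (1/m) (Σ_{k=0}^{m−1} K_yy^k)(ψ_{y,0} − K_yx ψ_x); moreover, if the operator norm of K_yy is strictly less than 1, then ‖(1/m) Σ_{k=0}^{m−1} ψ_{y,k} − K_yx ψ_x‖ ≤ ‖ψ_{y,0} − K_yx ψ_x‖ / (m (1 − ‖K_yy‖)), and hence the Cesàro averages converge to K_yx ψ_x as m → ∞. -/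
open Matrix Filter

/-!
Write `c = K_yx ψ_x`. The error `e k = ψ_{y,k} - c` satisfies `e (k + 1) = K_yy (e k)`, so it is
`K_yy ^ k` applied to the initial error. Averaging gives the closed form, and the geometric series
bounds `‖∑ k < m, K_yy ^ k‖` by `1 / (1 - ‖K_yy‖)` uniformly in `m`, so the averaged error is
`O(1 / m)`.
-/

section Module

variable {A E : Type*} [Semiring A] [AddCommGroup E] [Module A E] {a : A} {c : E} {x : ℕ → E}

theorem eq_add_pow_smul_of_affine_recursion (hx : ∀ k, x (k + 1) = a • (x k - c) + c) (k : ℕ) :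
    x k = c + a ^ k • (x 0 - c) := by
  induction k with
  | zero => simp
  | succ k ih => rw [hx, ih, add_sub_cancel_left, smul_smul, ← pow_succ', add_comm]

theorem sum_range_of_affine_recursion (hx : ∀ k, x (k + 1) = a • (x k - c) + c) (m : ℕ) :
    ∑ k ∈ Finset.range m, x k = m • c + (∑ k ∈ Finset.range m, a ^ k) • (x 0 - c) := by
  rw [Finset.sum_congr rfl fun k _ => eq_add_pow_smul_of_affine_recursion hx k,
    Finset.sum_add_distrib, Finset.sum_const, Finset.card_range, Finset.sum_smul]

theorem cesaro_of_affine_recursion (𝕜 : Type*) [DivisionSemiring 𝕜] [CharZero 𝕜] [Module 𝕜 E]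
    (hx : ∀ k, x (k + 1) = a • (x k - c) + c) {m : ℕ} (hm : m ≠ 0) :
    (m : 𝕜)⁻¹ • ∑ k ∈ Finset.range m, x k =
      c + (m : 𝕜)⁻¹ • (∑ k ∈ Finset.range m, a ^ k) • (x 0 - c) := by
  rw [sum_range_of_affine_recursion hx, smul_add, ← Nat.cast_smul_eq_nsmul 𝕜,
    inv_smul_smul₀ (Nat.cast_ne_zero.mpr hm)]

end Module

theorem geom_sum_le_inv_one_sub {𝕜 : Type*} [Field 𝕜] [LinearOrder 𝕜] [IsStrictOrderedRing 𝕜]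
    {r : 𝕜} (hr₀ : 0 ≤ r) (hr₁ : r < 1) (m : ℕ) :
    ∑ k ∈ Finset.range m, r ^ k ≤ (1 - r)⁻¹ := by
  rw [← one_div, le_div_iff₀ (sub_pos.mpr hr₁), geom_sum_mul_neg]
  exact sub_le_self _ (pow_nonneg hr₀ m)

section OperatorNorm

variable {𝕜 E : Type*} [NontriviallyNormedField 𝕜] [SeminormedAddCommGroup E] [NormedSpace 𝕜 E]

theorem norm_pow_apply_le_opNorm_pow_mul (T : E →L[𝕜] E) (k : ℕ) (v : E) :
    ‖(T ^ k) v‖ ≤ ‖T‖ ^ k * ‖v‖ := by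
  simpa using le_geom (u := fun j => ‖(T ^ j) v‖) (norm_nonneg T) k fun j _ => by
    simpa only [pow_succ', mul_apply_eq_comp] using T.le_opNorm ((T ^ j) v)

theorem norm_sum_pow_apply_le_div {T : E →L[𝕜] E} (hT : ‖T‖ < 1) (m : ℕ) (v : E) :
    ‖(∑ k ∈ Finset.range m, T ^ k) v‖ ≤ ‖v‖ / (1 - ‖T‖) :=
  calc
    ‖(∑ k ∈ Finset.range m, T ^ k) v‖ = ‖∑ k ∈ Finset.range m, (T ^ k) v‖ := by
      rw [_root_.sum_apply]
    _ ≤ ∑ k ∈ Finset.range m, ‖T‖ ^ k * ‖v‖ :=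
      norm_sum_le_of_le _ fun k _ => norm_pow_apply_le_opNorm_pow_mul T k v
    _ = (∑ k ∈ Finset.range m, ‖T‖ ^ k) * ‖v‖ := by rw [Finset.sum_mul]
    _ ≤ (1 - ‖T‖)⁻¹ * ‖v‖ := by
      gcongr
      exact geom_sum_le_inv_one_sub (norm_nonneg T) hT m
    _ = ‖v‖ / (1 - ‖T‖) := inv_mul_eq_div _ _

end OperatorNorm

section Contraction

variable {E : Type*} [SeminormedAddCommGroup E] [NormedSpace ℝ E] {T : E →L[ℝ] E} {c : E}
  {x : ℕ → E}

theorem norm_cesaro_sub_le_of_affine_recursion (hx : ∀ k, x (k + 1) = T (x k - c) + c)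
    (hT : ‖T‖ < 1) {m : ℕ} (hm : m ≠ 0) :
    ‖(m : ℝ)⁻¹ • ∑ k ∈ Finset.range m, x k - c‖ ≤ ‖x 0 - c‖ / (m * (1 - ‖T‖)) :=
  calc
    ‖(m : ℝ)⁻¹ • ∑ k ∈ Finset.range m, x k - c‖
        = (m : ℝ)⁻¹ * ‖(∑ k ∈ Finset.range m, T ^ k) (x 0 - c)‖ := by
      rw [cesaro_of_affine_recursion (a := T) ℝ hx hm, add_sub_cancel_left, norm_smul, norm_inv,
        Real.norm_natCast, ContinuousLinearMap.smul_def]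
    _ ≤ (m : ℝ)⁻¹ * (‖x 0 - c‖ / (1 - ‖T‖)) := by
      gcongr
      exact norm_sum_pow_apply_le_div hT m _
    _ = ‖x 0 - c‖ / (m * (1 - ‖T‖)) := by rw [inv_mul_eq_div, div_div, mul_comm]

theorem tendsto_cesaro_of_affine_recursion (hx : ∀ k, x (k + 1) = T (x k - c) + c)
    (hT : ‖T‖ < 1) :
    Tendsto (fun m : ℕ => (m : ℝ)⁻¹ • ∑ k ∈ Finset.range m, x k) atTop (nhds c) := by
  have hbound : ∀ᶠ m : ℕ in atTop,
      ‖(m : ℝ)⁻¹ • ∑ k ∈ Finset.range m, x k - c‖ ≤ ‖x 0 - c‖ / (1 - ‖T‖) / m := by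
    filter_upwards [eventually_ne_atTop 0] with m hm
    simpa only [div_div, mul_comm] using norm_cesaro_sub_le_of_affine_recursion hx hT hm
  exact tendsto_sub_nhds_zero_iff.mp <|
    squeeze_zero_norm' hbound (tendsto_const_div_atTop_nhds_zero_nat _)

end Contraction

theorem tendsto_toLp_iff {p : ENNReal} {α ι : Type*} {β : ι → Type*} [∀ i, TopologicalSpace (β i)]
    {l : Filter α} {f : α → ∀ i, β i} {v : ∀ i, β i} :
    Tendsto (fun a => WithLp.toLp p (f a)) l (nhds (WithLp.toLp p v)) ↔ Tendsto f l (nhds v) :=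
  (PiLp.homeomorph p β).symm.isInducing.tendsto_nhds_iff.symm

theorem fast_koopman_cesaro_general {E : Type*} [SeminormedAddCommGroup E] [NormedSpace ℝ E]
    (T : E →L[ℝ] E) (c : E) (x : ℕ → E) (hx : ∀ k, x (k + 1) = T (x k - c) + c) :
    (∀ m : ℕ, 1 ≤ m →
      (m : ℝ)⁻¹ • ∑ k ∈ Finset.range m, x k =
        c + (m : ℝ)⁻¹ • (∑ k ∈ Finset.range m, T ^ k) (x 0 - c)) ∧
    (‖T‖ < 1 →
      (∀ m : ℕ, 1 ≤ m →
        ‖(m : ℝ)⁻¹ • ∑ k ∈ Finset.range m, x k - c‖ ≤ ‖x 0 - c‖ / (m * (1 - ‖T‖))) ∧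
      Tendsto (fun m : ℕ => (m : ℝ)⁻¹ • ∑ k ∈ Finset.range m, x k) atTop (nhds c)) :=
  ⟨fun _ hm => cesaro_of_affine_recursion (a := T) ℝ hx (Nat.one_le_iff_ne_zero.mp hm),
    fun hT => ⟨fun _ hm =>
      norm_cesaro_sub_le_of_affine_recursion hx hT (Nat.one_le_iff_ne_zero.mp hm),
      tendsto_cesaro_of_affine_recursion hx hT⟩⟩

/-- For every `m ≥ 1`, the Cesàro average of the fast Koopman
iterates satisfies the closed form
`(1/m) Σ_{k<m} ψ_{y,k} = K_yx ψ_x + (1/m)(Σ_{k<m} K_yy^k)(ψ_{y,0} − K_yx ψ_x)`;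
moreover, if the operator norm of `K_yy` (induced by the Euclidean norm) is
strictly less than `1`, then
`‖(1/m) Σ_{k<m} ψ_{y,k} − K_yx ψ_x‖ ≤ ‖ψ_{y,0} − K_yx ψ_x‖ / (m (1 − ‖K_yy‖))`
and the Cesàro averages converge to `K_yx ψ_x` as `m → ∞`. -/
theorem fast_koopman_cesaro {n p : ℕ}
    (Kyy : Matrix (Fin n) (Fin n) ℝ) (Kyx : Matrix (Fin n) (Fin p) ℝ)
    (ψx : Fin p → ℝ) (ψy0 : Fin n → ℝ)
    (ψ : ℕ → Fin n → ℝ)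
    (h0 : ψ 0 = ψy0)
    (hrec : ∀ k, ψ (k + 1) = Kyy.mulVec (ψ k - Kyx.mulVec ψx) + Kyx.mulVec ψx) :
    (∀ m : ℕ, 1 ≤ m →
      (m : ℝ)⁻¹ • ∑ k ∈ Finset.range m, ψ k =
        Kyx.mulVec ψx +
          (m : ℝ)⁻¹ • (∑ k ∈ Finset.range m, Kyy ^ k).mulVec (ψy0 - Kyx.mulVec ψx)) ∧
    (‖Matrix.toEuclideanCLM (𝕜 := ℝ) Kyy‖ < 1 →
      (∀ m : ℕ, 1 ≤ m →
        ‖(WithLp.equiv 2 (Fin n → ℝ)).symm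
            ((m : ℝ)⁻¹ • ∑ k ∈ Finset.range m, ψ k - Kyx.mulVec ψx)‖ ≤
          ‖(WithLp.equiv 2 (Fin n → ℝ)).symm (ψy0 - Kyx.mulVec ψx)‖ /
            (m * (1 - ‖Matrix.toEuclideanCLM (𝕜 := ℝ) Kyy‖))) ∧
      Tendsto (fun m : ℕ => (m : ℝ)⁻¹ • ∑ k ∈ Finset.range m, ψ k) atTop
        (nhds (Kyx.mulVec ψx))) := by
  subst h0
  simpa [← map_pow, ← map_sum, ← WithLp.toLp_sum, ← WithLp.toLp_smul, ← WithLp.toLp_sub,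
    ← WithLp.toLp_add, tendsto_toLp_iff] using
    fast_koopman_cesaro_general (toEuclideanCLM (𝕜 := ℝ) Kyy) (WithLp.toLp 2 (Kyx *ᵥ ψx))
      (fun k => WithLp.toLp 2 (ψ k)) fun k => congrArg _ (hrec k)
end

section
/- Assume the operator norm of K_yy is strictly less than 1, and let avg_m = (1/m) Σ_{k=0}^{m−1} ψ_{y,k} denote the Cesàro average of the fast Koopman iterates. Then the slow-scale update converges: lim_{m→∞} [ K_xx (ψ_x − K_xy · avg_m) + K_xy · avg_m ] = K_comb ψ_x, where K_comb = K_xx + (I − K_xx) K_xy K_yx. -/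
open Matrix Filter

/-!
The fast error `e_k = ψ_{y,k} - K_yx ψ_x` evolves linearly, `e_k = K_yy ^ k e_0`. If the operator
norm of `K_yy` is less than `1`, its powers tend to `0`, so the fast iterates, and with them their
Cesàro averages, converge to `K_yx ψ_x`. The slow update is continuous in the average, and
substituting the limit gives `K_comb ψ_x`.
-/

open scoped Topology

section AffineRecursion

variable {n R : Type*} [Fintype n] [DecidableEq n] [Ring R]
  {A : Matrix n n R} {c : n → R} {x : ℕ → n → R}

theorem sub_eq_pow_mulVec_of_affine_rec (hx : ∀ k, x (k + 1) = A *ᵥ (x k - c) + c) (k : ℕ) :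
    x k - c = A ^ k *ᵥ (x 0 - c) := by
  induction k with
  | zero => rw [pow_zero, one_mulVec]
  | succ k ih => rw [hx, add_sub_cancel_right, ih, mulVec_mulVec, ← pow_succ']

theorem tendsto_of_affine_rec [TopologicalSpace R] [IsTopologicalRing R]
    (hA : Tendsto (fun k ↦ A ^ k) atTop (𝓝 0)) (hx : ∀ k, x (k + 1) = A *ᵥ (x k - c) + c) :
    Tendsto x atTop (𝓝 c) := by
  have herror : Tendsto (fun k ↦ A ^ k *ᵥ (x 0 - c)) atTop (𝓝 0) := by
    have hcont : Continuous fun B : Matrix n n R ↦ B *ᵥ (x 0 - c) := by fun_prop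
    simpa only [zero_mulVec, Function.comp_def] using (hcont.tendsto 0).comp hA
  rw [← tendsto_sub_nhds_zero_iff]
  exact herror.congr fun k ↦ (sub_eq_pow_mulVec_of_affine_rec hx k).symm

end AffineRecursion

open scoped Matrix.Norms.L2Operator in
theorem tendsto_matrix_pow_atTop_nhds_zero_of_norm_toEuclideanCLM_lt_one {n 𝕜 : Type*} [Fintype n]
    [DecidableEq n] [RCLike 𝕜] {A : Matrix n n 𝕜} (hA : ‖toEuclideanCLM (𝕜 := 𝕜) A‖ < 1) :
    Tendsto (fun k ↦ A ^ k) atTop (𝓝 0) :=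
  -- The L2 operator norm is definitionally the norm of `toEuclideanCLM A`, and its topology
  -- is definitionally the entrywise one.
  tendsto_pow_atTop_nhds_zero_of_norm_lt_one hA

section SlowUpdate

variable {n p R : Type*} [Fintype n] [Fintype p] [DecidableEq p]

theorem slow_update_eq_combined_mulVec [Ring R] (Kyx : Matrix n p R) (Kxx : Matrix p p R)
    (Kxy : Matrix p n R) (ψx : p → R) :
    Kxx *ᵥ (ψx - Kxy *ᵥ Kyx *ᵥ ψx) + Kxy *ᵥ Kyx *ᵥ ψx =
      (Kxx + (1 - Kxx) * Kxy * Kyx) *ᵥ ψx := by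
  simp only [add_mulVec, sub_mulVec, mulVec_sub, one_mulVec, ← mulVec_mulVec]
  abel

theorem slow_scale_update_limit_general [DecidableEq n] [NormedRing R] [NormedSpace ℝ R]
    {Kyy : Matrix n n R} (Kyx : Matrix n p R) (Kxx : Matrix p p R) (Kxy : Matrix p n R)
    (ψx : p → R) {ψ : ℕ → n → R}
    (hrec : ∀ k, ψ (k + 1) = Kyy *ᵥ (ψ k - Kyx *ᵥ ψx) + Kyx *ᵥ ψx)
    (hK : Tendsto (fun k ↦ Kyy ^ k) atTop (𝓝 0)) :
    Tendsto
      (fun m : ℕ ↦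
        Kxx *ᵥ (ψx - Kxy *ᵥ ((m : ℝ)⁻¹ • ∑ k ∈ Finset.range m, ψ k)) +
          Kxy *ᵥ ((m : ℝ)⁻¹ • ∑ k ∈ Finset.range m, ψ k))
      atTop (𝓝 ((Kxx + (1 - Kxx) * Kxy * Kyx) *ᵥ ψx)) := by
  have haverage : Tendsto (fun m : ℕ ↦ (m : ℝ)⁻¹ • ∑ k ∈ Finset.range m, ψ k) atTop
      (𝓝 (Kyx *ᵥ ψx)) := (tendsto_of_affine_rec hK hrec).cesaro_smul
  have hupdate : Continuous fun a : n → R ↦ Kxx *ᵥ (ψx - Kxy *ᵥ a) + Kxy *ᵥ a := by fun_prop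
  rw [← slow_update_eq_combined_mulVec]
  exact (hupdate.tendsto _).comp haverage

end SlowUpdate

/-- Assume the operator norm of `K_yy` (induced by the Euclidean
norm) is strictly less than `1`, and let `avg_m = (1/m) Σ_{k<m} ψ_{y,k}` denote
the Cesàro average of the fast Koopman iterates.  Then the slow-scale update
converges:
`lim_{m→∞} [K_xx (ψ_x − K_xy avg_m) + K_xy avg_m] = K_comb ψ_x`, where
`K_comb = K_xx + (I − K_xx) K_xy K_yx`. -/
theorem slow_scale_update_limit {n p : ℕ}
    (Kyy : Matrix (Fin n) (Fin n) ℝ) (Kyx : Matrix (Fin n) (Fin p) ℝ)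
    (Kxx : Matrix (Fin p) (Fin p) ℝ) (Kxy : Matrix (Fin p) (Fin n) ℝ)
    (ψx : Fin p → ℝ) (ψy0 : Fin n → ℝ)
    (ψ : ℕ → Fin n → ℝ)
    (h0 : ψ 0 = ψy0)
    (hrec : ∀ k, ψ (k + 1) = Kyy.mulVec (ψ k - Kyx.mulVec ψx) + Kyx.mulVec ψx)
    (hK : ‖Matrix.toEuclideanCLM (𝕜 := ℝ) Kyy‖ < 1) :
    Tendsto
      (fun m : ℕ =>
        Kxx.mulVec (ψx - Kxy.mulVec ((m : ℝ)⁻¹ • ∑ k ∈ Finset.range m, ψ k)) +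
          Kxy.mulVec ((m : ℝ)⁻¹ • ∑ k ∈ Finset.range m, ψ k))
      atTop (nhds ((Kxx + (1 - Kxx) * Kxy * Kyx).mulVec ψx)) := by
  exact slow_scale_update_limit_general Kyx Kxx Kxy ψx hrec
    (tendsto_matrix_pow_atTop_nhds_zero_of_norm_toEuclideanCLM_lt_one hK)
end

section
/- If the matrix Q = 2Q_ww + 2K_ywᵀ(I − K_yy)ᵀ P (I − K_yy) K_yw is positive definite, then for every ψ_y ∈ ℝ^{n_y} the function ψ_w ↦ G(ψ_y, ψ_w) has a unique global minimizer over ℝ^{n_w}, and this minimizer equals −F ψ_y − d, where F = Q^{−1} R, d = Q^{−1} q, R = Q_wy + Q_ywᵀ + 2K_ywᵀ(I − K_yy)ᵀ P K_yy, and q = (Q_wu + Q_uwᵀ) ψ_u + c_w + K_ywᵀ(I − K_yy)ᵀ p + [2K_ywᵀ(I − K_yy)ᵀ P (I − K_yy) K_yx + Q_wx + Q_xwᵀ] ψ_x. -/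
open Matrix Filter

noncomputable section

/-- The next-state map
`ψ_y⁺(ψ_y, ψ_w) = K_yy (ψ_y − K_yx ψ_x − K_yw ψ_w) + K_yx ψ_x + K_yw ψ_w`. -/
def nextY {nx ny nw : ℕ}
    (Kyy : Matrix (Fin ny) (Fin ny) ℝ) (Kyx : Matrix (Fin ny) (Fin nx) ℝ)
    (Kyw : Matrix (Fin ny) (Fin nw) ℝ) (ψx : Fin nx → ℝ)
    (py : Fin ny → ℝ) (pw : Fin nw → ℝ) : Fin ny → ℝ :=
  Kyy.mulVec (py - Kyx.mulVec ψx - Kyw.mulVec pw) + Kyx.mulVec ψx + Kyw.mulVec pw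

/-- The Bellman right-hand side
`G(ψ_y, ψ_w) = Σ_{i,j} ψ_iᵀ Q_{ij} ψ_j + Σ_i c_iᵀ ψ_i + c_0 + ψ_y⁺ᵀ P ψ_y⁺ + pᵀ ψ_y⁺`,
where `ψ_y⁺ = ψ_y⁺(ψ_y, ψ_w)` and the variables `x`, `u` are held at `ψ_x`, `ψ_u`. -/
def bellmanG {nx ny nw nu : ℕ}
    (Kyy : Matrix (Fin ny) (Fin ny) ℝ) (Kyx : Matrix (Fin ny) (Fin nx) ℝ)
    (Kyw : Matrix (Fin ny) (Fin nw) ℝ)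
    (Qxx : Matrix (Fin nx) (Fin nx) ℝ) (Qxy : Matrix (Fin nx) (Fin ny) ℝ)
    (Qxw : Matrix (Fin nx) (Fin nw) ℝ) (Qxu : Matrix (Fin nx) (Fin nu) ℝ)
    (Qyx : Matrix (Fin ny) (Fin nx) ℝ) (Qyy : Matrix (Fin ny) (Fin ny) ℝ)
    (Qyw : Matrix (Fin ny) (Fin nw) ℝ) (Qyu : Matrix (Fin ny) (Fin nu) ℝ)
    (Qwx : Matrix (Fin nw) (Fin nx) ℝ) (Qwy : Matrix (Fin nw) (Fin ny) ℝ)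
    (Qww : Matrix (Fin nw) (Fin nw) ℝ) (Qwu : Matrix (Fin nw) (Fin nu) ℝ)
    (Qux : Matrix (Fin nu) (Fin nx) ℝ) (Quy : Matrix (Fin nu) (Fin ny) ℝ)
    (Quw : Matrix (Fin nu) (Fin nw) ℝ) (Quu : Matrix (Fin nu) (Fin nu) ℝ)
    (cx : Fin nx → ℝ) (cy : Fin ny → ℝ) (cw : Fin nw → ℝ) (cu : Fin nu → ℝ)
    (c0 : ℝ) (ψx : Fin nx → ℝ) (ψu : Fin nu → ℝ)
    (P : Matrix (Fin ny) (Fin ny) ℝ) (p : Fin ny → ℝ)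
    (py : Fin ny → ℝ) (pw : Fin nw → ℝ) : ℝ :=
  ψx ⬝ᵥ Qxx.mulVec ψx + ψx ⬝ᵥ Qxy.mulVec py + ψx ⬝ᵥ Qxw.mulVec pw +
    ψx ⬝ᵥ Qxu.mulVec ψu +
  py ⬝ᵥ Qyx.mulVec ψx + py ⬝ᵥ Qyy.mulVec py + py ⬝ᵥ Qyw.mulVec pw +
    py ⬝ᵥ Qyu.mulVec ψu +
  pw ⬝ᵥ Qwx.mulVec ψx + pw ⬝ᵥ Qwy.mulVec py + pw ⬝ᵥ Qww.mulVec pw +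
    pw ⬝ᵥ Qwu.mulVec ψu +
  ψu ⬝ᵥ Qux.mulVec ψx + ψu ⬝ᵥ Quy.mulVec py + ψu ⬝ᵥ Quw.mulVec pw +
    ψu ⬝ᵥ Quu.mulVec ψu +
  cx ⬝ᵥ ψx + cy ⬝ᵥ py + cw ⬝ᵥ pw + cu ⬝ᵥ ψu + c0 +
  nextY Kyy Kyx Kyw ψx py pw ⬝ᵥ P.mulVec (nextY Kyy Kyx Kyw ψx py pw) +
  p ⬝ᵥ nextY Kyy Kyx Kyw ψx py pw

/-!
The next state is affine in `ψ_w`, so `ψ_w ↦ G(ψ_y, ψ_w)` is a quadratic polynomial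
`½ ψ_wᵀ H ψ_w + ψ_wᵀ (R ψ_y + q) + const`. When `H` is positive definite, completing the square
around the critical point `-H⁻¹ (R ψ_y + q)` shows that this point is the only minimizer.
A quadratic form sees only the symmetric part of its matrix, which is why `Q_ww + Q_wwᵀ` and
`P + Pᵀ` appear in `H`, `R` and `q`; for symmetric matrices they are `2 Q_ww` and `2 P`.
-/

section QuadraticPolynomial

variable {m n R : Type*} [Fintype m] [Fintype n]

lemma dotProduct_add_transpose_mulVec_self [CommSemiring R] (M : Matrix n n R) (v : n → R) :
    v ⬝ᵥ (M + Mᵀ) *ᵥ v = 2 * (v ⬝ᵥ M *ᵥ v) := by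
  rw [add_mulVec, dotProduct_add, dotProduct_transpose_mulVec, two_mul]

lemma dotProduct_mulVec_self_affine [CommSemiring R] (M : Matrix m m R) (B : Matrix m n R)
    (a : m → R) (v : n → R) :
    (a + B *ᵥ v) ⬝ᵥ M *ᵥ (a + B *ᵥ v) =
      v ⬝ᵥ (Bᵀ * M * B) *ᵥ v + v ⬝ᵥ (Bᵀ * (M + Mᵀ)) *ᵥ a + a ⬝ᵥ M *ᵥ a := by
  have pull (x : m → R) : B *ᵥ v ⬝ᵥ x = v ⬝ᵥ Bᵀ *ᵥ x := by
    rw [dotProduct_transpose_mulVec, dotProduct_comm]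
  have swap : a ⬝ᵥ M *ᵥ (B *ᵥ v) = v ⬝ᵥ Bᵀ *ᵥ (Mᵀ *ᵥ a) := by
    rw [← pull, dotProduct_transpose_mulVec]
  simp only [mulVec_add, add_mulVec, dotProduct_add, add_dotProduct, Matrix.mul_add, pull, swap,
    ← mulVec_mulVec]
  ring

lemma quadratic_complete_square [CommRing R] {M : Matrix n n R} (hM : M.IsSymm)
    {b w : n → R} (hw : M *ᵥ w = -b) (v : n → R) :
    v ⬝ᵥ M *ᵥ v + 2 * (v ⬝ᵥ b) = (v - w) ⬝ᵥ M *ᵥ (v - w) + w ⬝ᵥ b := by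
  have cross : w ⬝ᵥ M *ᵥ v = -(v ⬝ᵥ b) := by
    rw [← dotProduct_transpose_mulVec, hM.eq, hw, dotProduct_neg]
  simp only [mulVec_sub, dotProduct_sub, sub_dotProduct, cross, hw, dotProduct_neg]
  ring

theorem isMinOn_quadratic_iff_of_posDef {K : Type*} [Field K] [LinearOrder K]
    [IsStrictOrderedRing K] [StarRing K] [TrivialStar K] [DecidableEq n] {M : Matrix n n K}
    (hM : M.PosDef) (b : n → K) (c : K) {v : n → K} :
    IsMinOn (fun x ↦ (x ⬝ᵥ M *ᵥ x) / 2 + x ⬝ᵥ b + c) Set.univ v ↔ v = -(M⁻¹ *ᵥ b) := by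
  set w := -(M⁻¹ *ᵥ b) with hw_def
  have critical : M *ᵥ w = -b := by
    rw [hw_def, mulVec_neg, mulVec_mulVec,
      mul_nonsing_inv _ ((isUnit_iff_isUnit_det M).mp hM.isUnit), one_mulVec]
  have square := quadratic_complete_square (isHermitian_iff_isSymm.mp hM.isHermitian) critical
  have value_at_w : w ⬝ᵥ M *ᵥ w = -(w ⬝ᵥ b) := by rw [critical, dotProduct_neg]
  have excess_pos {x : n → K} (hx : x ≠ w) : 0 < (x - w) ⬝ᵥ M *ᵥ (x - w) := by
    simpa only [star_trivial] using hM.dotProduct_mulVec_pos (sub_ne_zero.mpr hx)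
  rw [isMinOn_univ_iff]
  constructor
  · intro hmin
    by_contra hne
    linarith [hmin w, square v, excess_pos hne]
  · rintro rfl x
    rcases eq_or_ne x w with rfl | hne
    · rfl
    · linarith [square x, excess_pos hne]

end QuadraticPolynomial

section Bellman

variable {nx ny nw nu : ℕ}
  (Kyy : Matrix (Fin ny) (Fin ny) ℝ) (Kyx : Matrix (Fin ny) (Fin nx) ℝ)
  (Kyw : Matrix (Fin ny) (Fin nw) ℝ)
  (Qxx : Matrix (Fin nx) (Fin nx) ℝ) (Qxy : Matrix (Fin nx) (Fin ny) ℝ)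
  (Qxw : Matrix (Fin nx) (Fin nw) ℝ) (Qxu : Matrix (Fin nx) (Fin nu) ℝ)
  (Qyx : Matrix (Fin ny) (Fin nx) ℝ) (Qyy : Matrix (Fin ny) (Fin ny) ℝ)
  (Qyw : Matrix (Fin ny) (Fin nw) ℝ) (Qyu : Matrix (Fin ny) (Fin nu) ℝ)
  (Qwx : Matrix (Fin nw) (Fin nx) ℝ) (Qwy : Matrix (Fin nw) (Fin ny) ℝ)
  (Qww : Matrix (Fin nw) (Fin nw) ℝ) (Qwu : Matrix (Fin nw) (Fin nu) ℝ)
  (Qux : Matrix (Fin nu) (Fin nx) ℝ) (Quy : Matrix (Fin nu) (Fin ny) ℝ)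
  (Quw : Matrix (Fin nu) (Fin nw) ℝ) (Quu : Matrix (Fin nu) (Fin nu) ℝ)
  (cx : Fin nx → ℝ) (cy : Fin ny → ℝ) (cw : Fin nw → ℝ) (cu : Fin nu → ℝ)
  (c0 : ℝ) (ψx : Fin nx → ℝ) (ψu : Fin nu → ℝ)
  (P : Matrix (Fin ny) (Fin ny) ℝ) (p : Fin ny → ℝ)

/-- The Hessian of `ψ_w ↦ G(ψ_y, ψ_w)`, written with the symmetrized cost matrices. It is the
matrix `Q` of the paper when `Q_ww` and `P` are symmetric. -/
def bellmanHessian : Matrix (Fin nw) (Fin nw) ℝ :=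
  Qww + Qwwᵀ + Kywᵀ * (1 - Kyy)ᵀ * (P + Pᵀ) * (1 - Kyy) * Kyw

/-- The matrix of the terms of `G(ψ_y, ψ_w)` that are bilinear in `ψ_w` and `ψ_y`, written with
the symmetrized `P`. It is the matrix `R` of the paper when `P` is symmetric. -/
def bellmanCross : Matrix (Fin nw) (Fin ny) ℝ :=
  Qwy + Qywᵀ + Kywᵀ * (1 - Kyy)ᵀ * (P + Pᵀ) * Kyy

/-- The gradient of `ψ_w ↦ G(0, ψ_w)` at `0`, written with the symmetrized `P`. It is the vector
`q` of the paper when `P` is symmetric. -/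
def bellmanOffset : Fin nw → ℝ :=
  (Qwu + Quwᵀ) *ᵥ ψu + cw + (Kywᵀ * (1 - Kyy)ᵀ) *ᵥ p +
    (Kywᵀ * (1 - Kyy)ᵀ * (P + Pᵀ) * (1 - Kyy) * Kyx + Qwx + Qxwᵀ) *ᵥ ψx

variable {Qww P} in
lemma bellmanHessian_of_isSymm (hQww : Qww.IsSymm) (hP : P.IsSymm) :
    bellmanHessian Kyy Kyw Qww P =
      (2 : ℝ) • Qww + (2 : ℝ) • (Kywᵀ * (1 - Kyy)ᵀ * P * (1 - Kyy) * Kyw) := by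
  simp only [bellmanHessian, hQww.eq, hP.eq, ← two_smul ℝ, Matrix.mul_smul, Matrix.smul_mul]

variable {P} in
lemma bellmanCross_of_isSymm (hP : P.IsSymm) :
    bellmanCross Kyy Kyw Qyw Qwy P =
      Qwy + Qywᵀ + (2 : ℝ) • (Kywᵀ * (1 - Kyy)ᵀ * P * Kyy) := by
  simp only [bellmanCross, hP.eq, ← two_smul ℝ P, Matrix.mul_smul, Matrix.smul_mul]

variable {P} in
lemma bellmanOffset_of_isSymm (hP : P.IsSymm) :
    bellmanOffset Kyy Kyx Kyw Qxw Qwx Qwu Quw cw ψx ψu P p =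
      (Qwu + Quwᵀ) *ᵥ ψu + cw + (Kywᵀ * (1 - Kyy)ᵀ) *ᵥ p +
        ((2 : ℝ) • (Kywᵀ * (1 - Kyy)ᵀ * P * (1 - Kyy) * Kyx) + Qwx + Qxwᵀ) *ᵥ ψx := by
  simp only [bellmanOffset, hP.eq, ← two_smul ℝ P, Matrix.mul_smul, Matrix.smul_mul]

lemma nextY_eq_add_mulVec (py : Fin ny → ℝ) (pw : Fin nw → ℝ) :
    nextY Kyy Kyx Kyw ψx py pw =
      nextY Kyy Kyx Kyw ψx py 0 + ((1 - Kyy) * Kyw) *ᵥ pw := by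
  simp only [nextY, mulVec_sub, mulVec_zero, Matrix.sub_mul, sub_mulVec, Matrix.one_mul,
    mulVec_mulVec]
  abel

lemma nextY_zero_right (py : Fin ny → ℝ) :
    nextY Kyy Kyx Kyw ψx py 0 = Kyy *ᵥ py + ((1 - Kyy) * Kyx) *ᵥ ψx := by
  simp only [nextY, mulVec_sub, mulVec_zero, Matrix.sub_mul, sub_mulVec, Matrix.one_mul,
    mulVec_mulVec]
  abel

theorem bellmanG_eq_quadratic (py : Fin ny → ℝ) (pw : Fin nw → ℝ) :
    bellmanG Kyy Kyx Kyw Qxx Qxy Qxw Qxu Qyx Qyy Qyw Qyu Qwx Qwy Qww Qwu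
        Qux Quy Quw Quu cx cy cw cu c0 ψx ψu P p py pw =
      (pw ⬝ᵥ bellmanHessian Kyy Kyw Qww P *ᵥ pw) / 2 +
        pw ⬝ᵥ (bellmanCross Kyy Kyw Qyw Qwy P *ᵥ py +
          bellmanOffset Kyy Kyx Kyw Qxw Qwx Qwu Quw cw ψx ψu P p) +
        bellmanG Kyy Kyx Kyw Qxx Qxy Qxw Qxu Qyx Qyy Qyw Qyu Qwx Qwy Qww Qwu
          Qux Quy Quw Quu cx cy cw cu c0 ψx ψu P p py 0 := by
  set B := (1 - Kyy) * Kyw with hB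
  set a := nextY Kyy Kyx Kyw ψx py 0 with ha
  have hBT : Kywᵀ * (1 - Kyy)ᵀ = Bᵀ := by rw [hB, transpose_mul]
  have hessian : (pw ⬝ᵥ bellmanHessian Kyy Kyw Qww P *ᵥ pw) / 2 =
      pw ⬝ᵥ Qww *ᵥ pw + pw ⬝ᵥ (Bᵀ * P * B) *ᵥ pw := by
    have symmetrized :
        bellmanHessian Kyy Kyw Qww P = Qww + Bᵀ * P * B + (Qww + Bᵀ * P * B)ᵀ := by
      simp only [bellmanHessian, hBT, Matrix.mul_assoc _ (1 - Kyy), ← hB, transpose_add,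
        transpose_mul, transpose_transpose, Matrix.mul_add, Matrix.add_mul, Matrix.mul_assoc]
      abel
    rw [symmetrized, dotProduct_add_transpose_mulVec_self, add_mulVec, dotProduct_add]
    ring
  have gradient : bellmanCross Kyy Kyw Qyw Qwy P *ᵥ py +
      bellmanOffset Kyy Kyx Kyw Qxw Qwx Qwu Quw cw ψx ψu P p =
      Qwy *ᵥ py + Qywᵀ *ᵥ py + Qwx *ᵥ ψx + Qxwᵀ *ᵥ ψx + Qwu *ᵥ ψu + Quwᵀ *ᵥ ψu + cw +
        Bᵀ *ᵥ p + (Bᵀ * (P + Pᵀ)) *ᵥ a := by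
    simp only [bellmanCross, bellmanOffset, hBT, ha, nextY_zero_right, add_mulVec, mulVec_add,
      mulVec_mulVec, Matrix.mul_assoc]
    abel
  rw [hessian, gradient, bellmanG, bellmanG, nextY_eq_add_mulVec, dotProduct_mulVec_self_affine]
  simp only [dotProduct_add, dotProduct_transpose_mulVec, mulVec_zero, dotProduct_zero,
    zero_dotProduct, dotProduct_comm pw cw]
  ring

theorem bellman_unique_minimizer_general
    (hpos : (bellmanHessian Kyy Kyw Qww P).PosDef) (py : Fin ny → ℝ) {pw : Fin nw → ℝ} :
    IsMinOn (bellmanG Kyy Kyx Kyw Qxx Qxy Qxw Qxu Qyx Qyy Qyw Qyu Qwx Qwy Qww Qwu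
        Qux Quy Quw Quu cx cy cw cu c0 ψx ψu P p py) Set.univ pw ↔
      pw = -(((bellmanHessian Kyy Kyw Qww P)⁻¹ * bellmanCross Kyy Kyw Qyw Qwy P) *ᵥ py) -
        (bellmanHessian Kyy Kyw Qww P)⁻¹ *ᵥ
          bellmanOffset Kyy Kyx Kyw Qxw Qwx Qwu Quw cw ψx ψu P p := by
  rw [funext (bellmanG_eq_quadratic Kyy Kyx Kyw Qxx Qxy Qxw Qxu Qyx Qyy Qyw Qyu Qwx Qwy Qww Qwu
      Qux Quy Quw Quu cx cy cw cu c0 ψx ψu P p py),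
    isMinOn_quadratic_iff_of_posDef hpos, mulVec_add, neg_add', mulVec_mulVec]

end Bellman

/-- If `Q = 2Q_ww + 2K_ywᵀ(I − K_yy)ᵀ P (I − K_yy) K_yw` is
positive definite, then for every `ψ_y` the function `ψ_w ↦ G(ψ_y, ψ_w)` has a
unique global minimizer over `ℝ^{n_w}`, equal to `−F ψ_y − d`, where
`F = Q⁻¹ R`, `d = Q⁻¹ q`, `R = Q_wy + Q_ywᵀ + 2K_ywᵀ(I − K_yy)ᵀ P K_yy`, and
`q = (Q_wu + Q_uwᵀ) ψ_u + c_w + K_ywᵀ(I − K_yy)ᵀ p +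
[2K_ywᵀ(I − K_yy)ᵀ P (I − K_yy) K_yx + Q_wx + Q_xwᵀ] ψ_x`. -/
theorem bellman_unique_minimizer {nx ny nw nu : ℕ}
    (Kyy : Matrix (Fin ny) (Fin ny) ℝ) (Kyx : Matrix (Fin ny) (Fin nx) ℝ)
    (Kyw : Matrix (Fin ny) (Fin nw) ℝ)
    (Qxx : Matrix (Fin nx) (Fin nx) ℝ) (Qxy : Matrix (Fin nx) (Fin ny) ℝ)
    (Qxw : Matrix (Fin nx) (Fin nw) ℝ) (Qxu : Matrix (Fin nx) (Fin nu) ℝ)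
    (Qyx : Matrix (Fin ny) (Fin nx) ℝ) (Qyy : Matrix (Fin ny) (Fin ny) ℝ)
    (Qyw : Matrix (Fin ny) (Fin nw) ℝ) (Qyu : Matrix (Fin ny) (Fin nu) ℝ)
    (Qwx : Matrix (Fin nw) (Fin nx) ℝ) (Qwy : Matrix (Fin nw) (Fin ny) ℝ)
    (Qww : Matrix (Fin nw) (Fin nw) ℝ) (Qwu : Matrix (Fin nw) (Fin nu) ℝ)
    (Qux : Matrix (Fin nu) (Fin nx) ℝ) (Quy : Matrix (Fin nu) (Fin ny) ℝ)
    (Quw : Matrix (Fin nu) (Fin nw) ℝ) (Quu : Matrix (Fin nu) (Fin nu) ℝ)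
    (cx : Fin nx → ℝ) (cy : Fin ny → ℝ) (cw : Fin nw → ℝ) (cu : Fin nu → ℝ)
    (c0 : ℝ) (ψx : Fin nx → ℝ) (ψu : Fin nu → ℝ)
    (P : Matrix (Fin ny) (Fin ny) ℝ) (p : Fin ny → ℝ)
    (hQww : Qww.IsSymm) (hQyy : Qyy.IsSymm) (hP : P.IsSymm)
    (Q : Matrix (Fin nw) (Fin nw) ℝ)
    (hQ : Q = (2 : ℝ) • Qww +
      (2 : ℝ) • (Kywᵀ * (1 - Kyy)ᵀ * P * (1 - Kyy) * Kyw))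
    (hQpos : Q.PosDef)
    (F : Matrix (Fin nw) (Fin ny) ℝ)
    (hF : F = Q⁻¹ * (Qwy + Qywᵀ + (2 : ℝ) • (Kywᵀ * (1 - Kyy)ᵀ * P * Kyy)))
    (q : Fin nw → ℝ)
    (hq : q = (Qwu + Quwᵀ).mulVec ψu + cw + (Kywᵀ * (1 - Kyy)ᵀ).mulVec p +
      ((2 : ℝ) • (Kywᵀ * (1 - Kyy)ᵀ * P * (1 - Kyy) * Kyx) + Qwx + Qxwᵀ).mulVec ψx)
    (d : Fin nw → ℝ) (hd : d = Q⁻¹.mulVec q) :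
    ∀ py : Fin ny → ℝ,
      (∀ pw : Fin nw → ℝ,
        bellmanG Kyy Kyx Kyw Qxx Qxy Qxw Qxu Qyx Qyy Qyw Qyu Qwx Qwy Qww Qwu
            Qux Quy Quw Quu cx cy cw cu c0 ψx ψu P p py (-(F.mulVec py) - d) ≤
          bellmanG Kyy Kyx Kyw Qxx Qxy Qxw Qxu Qyx Qyy Qyw Qyu Qwx Qwy Qww Qwu
            Qux Quy Quw Quu cx cy cw cu c0 ψx ψu P p py pw) ∧
      (∀ pw : Fin nw → ℝ,
        (∀ pw' : Fin nw → ℝ,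
          bellmanG Kyy Kyx Kyw Qxx Qxy Qxw Qxu Qyx Qyy Qyw Qyu Qwx Qwy Qww Qwu
              Qux Quy Quw Quu cx cy cw cu c0 ψx ψu P p py pw ≤
            bellmanG Kyy Kyx Kyw Qxx Qxy Qxw Qxu Qyx Qyy Qyw Qyu Qwx Qwy Qww Qwu
              Qux Quy Quw Quu cx cy cw cu c0 ψx ψu P p py pw') →
        pw = -(F.mulVec py) - d) := by
  rw [← bellmanHessian_of_isSymm Kyy Kyw hQww hP] at hQ
  rw [← bellmanCross_of_isSymm Kyy Kyw Qyw Qwy hP] at hF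
  rw [← bellmanOffset_of_isSymm Kyy Kyx Kyw Qxw Qwx Qwu Quw cw ψx ψu p hP] at hq
  subst hQ hF hq hd
  exact fun py ↦
    ⟨isMinOn_univ_iff.mp ((bellman_unique_minimizer_general (hpos := hQpos) ..).mpr rfl),
      fun pw hmin ↦ (bellman_unique_minimizer_general (hpos := hQpos) ..).mp
        (isMinOn_univ_iff.mpr hmin)⟩
end
end

section
/- Suppose the matrix Q = 2Q_ww + 2K_ywᵀ(I − K_yy)ᵀ P (I − K_yy) K_yw is positive definite, and define Φ(ψ_y) = min over ψ_w ∈ ℝ^{n_w} of G(ψ_y, ψ_w), F = Q^{−1} R with R = Q_wy + Q_ywᵀ + 2K_ywᵀ(I − K_yy)ᵀ P K_yy. Then for every ψ_y ∈ ℝ^{n_y}: Φ(ψ_y) + Φ(−ψ_y) − 2Φ(0) = 2 ψ_yᵀ (K_yyᵀ P K_yy − (1/2) Fᵀ Q F + Q_yy) ψ_y; that is, the quadratic part of the minimized Bellman right-hand side is given by the Riccati expression K_yyᵀ P K_yy − (1/2) Fᵀ Q F + Q_yy. -/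
open Matrix Filter

noncomputable section

/-!
With `A = K_yy`, `L = (I − K_yy) K_yw` and a constant vector `a`, the next state is
`A ψ_y + L ψ_w + a`, so the Bellman right-hand side is a quadratic polynomial
`½ wᵀ Q w + wᵀ (R y + b) + yᵀ M y + yᵀ d + e` in `(y, w)`. Completing the square in `w` gives the
minimum `yᵀ M y + yᵀ d + e − ½ (R y + b)ᵀ Q⁻¹ (R y + b)`, whose second difference in `y` sees
neither `b`, `d` nor `e`.
-/

theorem dotProduct_mulVec_comm_of_isSymm {R n : Type*} [NonUnitalCommSemiring R] [Fintype n]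
    {A : Matrix n n R} (hA : A.IsSymm) (u v : n → R) : u ⬝ᵥ A *ᵥ v = v ⬝ᵥ A *ᵥ u := by
  rw [← dotProduct_transpose_mulVec, hA.eq]

theorem dotProduct_mulVec_second_difference {R n : Type*} [CommRing R] [Fintype n]
    (A : Matrix n n R) (u b : n → R) :
    (u + b) ⬝ᵥ A *ᵥ (u + b) + (-u + b) ⬝ᵥ A *ᵥ (-u + b) - 2 * (b ⬝ᵥ A *ᵥ b) =
      2 * (u ⬝ᵥ A *ᵥ u) := by
  simp only [mulVec_add, mulVec_neg, dotProduct_add, add_dotProduct, neg_dotProduct,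
    dotProduct_neg]
  ring

theorem dotProduct_mulVec_add_two_mul_eq_completed_square {R n : Type*} [CommRing R]
    [Fintype n] [DecidableEq n] {Q : Matrix n n R} (hQ : Q.IsSymm) (hdet : IsUnit Q.det)
    (w v : n → R) :
    w ⬝ᵥ Q *ᵥ w + 2 * (w ⬝ᵥ v) =
      (w + Q⁻¹ *ᵥ v) ⬝ᵥ Q *ᵥ (w + Q⁻¹ *ᵥ v) - v ⬝ᵥ Q⁻¹ *ᵥ v := by
  have hv : Q *ᵥ (Q⁻¹ *ᵥ v) = v := by rw [mulVec_mulVec, mul_nonsing_inv Q hdet, one_mulVec]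
  have hcross : Q⁻¹ *ᵥ v ⬝ᵥ Q *ᵥ w = w ⬝ᵥ v := by rw [dotProduct_mulVec_comm_of_isSymm hQ, hv]
  rw [mulVec_add, hv, add_dotProduct, dotProduct_add, dotProduct_add, hcross,
    dotProduct_comm (Q⁻¹ *ᵥ v) v]
  ring

section QuadraticPart

variable {k m n : Type*} [Fintype k] [Fintype m] [Fintype n]

theorem isLeast_range_quadratic_of_posDef [DecidableEq n] {Q : Matrix n n ℝ} (hQ : Q.PosDef)
    (v : n → ℝ) (c : ℝ) :
    IsLeast (Set.range fun w : n → ℝ => (1 / 2 : ℝ) * (w ⬝ᵥ Q *ᵥ w) + w ⬝ᵥ v + c)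
      (c - (1 / 2 : ℝ) * (v ⬝ᵥ Q⁻¹ *ᵥ v)) := by
  have square := dotProduct_mulVec_add_two_mul_eq_completed_square
    (isHermitian_iff_isSymm.1 hQ.isHermitian) ((isUnit_iff_isUnit_det Q).1 hQ.isUnit)
  constructor
  · refine ⟨-(Q⁻¹ *ᵥ v), ?_⟩
    have hmin := square (-(Q⁻¹ *ᵥ v)) v
    rw [neg_add_cancel, zero_dotProduct] at hmin
    linarith
  · rintro _ ⟨w, rfl⟩
    have hnonneg : 0 ≤ (w + Q⁻¹ *ᵥ v) ⬝ᵥ Q *ᵥ (w + Q⁻¹ *ᵥ v) :=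
      hQ.posSemidef.dotProduct_mulVec_nonneg _
    linarith [square w v]

/-- `G` is a real quadratic polynomial in `(y, w)` with homogeneous quadratic part
`½ wᵀ Q w + wᵀ R y + yᵀ M y`. The factor `½` makes a symmetric `Q` the Hessian in `w`, the
variable to be minimized out; the lower-order coefficients are left unspecified. -/
def HasQuadraticPart (G : (m → ℝ) → (n → ℝ) → ℝ) (Q : Matrix n n ℝ) (R : Matrix n m ℝ)
    (M : Matrix m m ℝ) : Prop :=
  ∃ (b : n → ℝ) (d : m → ℝ) (e : ℝ), ∀ y w,
    G y w = (1 / 2 : ℝ) * (w ⬝ᵥ Q *ᵥ w) + w ⬝ᵥ (R *ᵥ y + b) + (y ⬝ᵥ M *ᵥ y + y ⬝ᵥ d + e)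

theorem hasQuadraticPart_comp_affine {P : Matrix k k ℝ} (hP : P.IsSymm) (p : k → ℝ)
    (A : Matrix k m ℝ) (L : Matrix k n ℝ) (a : k → ℝ) :
    HasQuadraticPart
      (fun y w => (A *ᵥ y + L *ᵥ w + a) ⬝ᵥ P *ᵥ (A *ᵥ y + L *ᵥ w + a) +
        p ⬝ᵥ (A *ᵥ y + L *ᵥ w + a))
      ((2 : ℝ) • (Lᵀ * P * L)) ((2 : ℝ) • (Lᵀ * P * A)) (Aᵀ * P * A) := by
  refine ⟨Lᵀ *ᵥ ((2 : ℝ) • P *ᵥ a + p), Aᵀ *ᵥ ((2 : ℝ) • P *ᵥ a + p), a ⬝ᵥ P *ᵥ a + p ⬝ᵥ a,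
    fun y w => ?_⟩
  simp only [mulVec_add, smul_mulVec, ← mulVec_mulVec, dotProduct_add, add_dotProduct,
    dotProduct_smul, smul_dotProduct, dotProduct_transpose_mulVec, smul_eq_mul,
    dotProduct_comm (P *ᵥ _)]
  rw [dotProduct_mulVec_comm_of_isSymm hP (A *ᵥ y) (L *ᵥ w),
    dotProduct_mulVec_comm_of_isSymm hP a (A *ᵥ y), dotProduct_mulVec_comm_of_isSymm hP a (L *ᵥ w)]
  ring

theorem HasQuadraticPart.second_difference_iInf [DecidableEq n] {G : (m → ℝ) → (n → ℝ) → ℝ}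
    {Q : Matrix n n ℝ} {R : Matrix n m ℝ} {M : Matrix m m ℝ} (hG : HasQuadraticPart G Q R M)
    (hQ : Q.PosDef) (y : m → ℝ) :
    (⨅ w, G y w) + (⨅ w, G (-y) w) - 2 * (⨅ w, G 0 w) =
      2 * (y ⬝ᵥ (M - (1 / 2 : ℝ) • ((Q⁻¹ * R)ᵀ * Q * (Q⁻¹ * R))) *ᵥ y) := by
  obtain ⟨b, d, e, hG⟩ := hG
  have hmin (y : m → ℝ) : ⨅ w, G y w =
      y ⬝ᵥ M *ᵥ y + y ⬝ᵥ d + e - (1 / 2 : ℝ) * ((R *ᵥ y + b) ⬝ᵥ Q⁻¹ *ᵥ (R *ᵥ y + b)) := by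
    simp only [hG]
    exact (isLeast_range_quadratic_of_posDef hQ _ _).csInf_eq
  have hdiff := dotProduct_mulVec_second_difference Q⁻¹ (R *ᵥ y) b
  have hgain : y ⬝ᵥ ((Q⁻¹ * R)ᵀ * Q * (Q⁻¹ * R)) *ᵥ y = R *ᵥ y ⬝ᵥ Q⁻¹ *ᵥ (R *ᵥ y) := by
    have hQQ : Q * (Q⁻¹ * R) = R :=
      mul_nonsing_inv_cancel_left Q R ((isUnit_iff_isUnit_det Q).1 hQ.isUnit)
    rw [Matrix.mul_assoc, hQQ, ← mulVec_mulVec, dotProduct_transpose_mulVec, mulVec_mulVec]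
  rw [hmin, hmin, hmin, sub_mulVec, smul_mulVec, dotProduct_sub, dotProduct_smul, hgain]
  simp only [mulVec_neg, mulVec_zero, neg_dotProduct, dotProduct_neg, zero_dotProduct, zero_add,
    neg_neg, smul_eq_mul]
  linarith

end QuadraticPart

section Bellman

variable {nx ny nw nu : ℕ}
    (Kyy : Matrix (Fin ny) (Fin ny) ℝ) (Kyx : Matrix (Fin ny) (Fin nx) ℝ)
    (Kyw : Matrix (Fin ny) (Fin nw) ℝ)
    (Qxx : Matrix (Fin nx) (Fin nx) ℝ) (Qxy : Matrix (Fin nx) (Fin ny) ℝ)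
    (Qxw : Matrix (Fin nx) (Fin nw) ℝ) (Qxu : Matrix (Fin nx) (Fin nu) ℝ)
    (Qyx : Matrix (Fin ny) (Fin nx) ℝ) (Qyy : Matrix (Fin ny) (Fin ny) ℝ)
    (Qyw : Matrix (Fin ny) (Fin nw) ℝ) (Qyu : Matrix (Fin ny) (Fin nu) ℝ)
    (Qwx : Matrix (Fin nw) (Fin nx) ℝ) (Qwy : Matrix (Fin nw) (Fin ny) ℝ)
    (Qww : Matrix (Fin nw) (Fin nw) ℝ) (Qwu : Matrix (Fin nw) (Fin nu) ℝ)
    (Qux : Matrix (Fin nu) (Fin nx) ℝ) (Quy : Matrix (Fin nu) (Fin ny) ℝ)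
    (Quw : Matrix (Fin nu) (Fin nw) ℝ) (Quu : Matrix (Fin nu) (Fin nu) ℝ)
    (cx : Fin nx → ℝ) (cy : Fin ny → ℝ) (cw : Fin nw → ℝ) (cu : Fin nu → ℝ)
    (c0 : ℝ) (ψx : Fin nx → ℝ) (ψu : Fin nu → ℝ)
    (P : Matrix (Fin ny) (Fin ny) ℝ) (p : Fin ny → ℝ)

theorem nextY_eq (y : Fin ny → ℝ) (w : Fin nw → ℝ) :
    nextY Kyy Kyx Kyw ψx y w =
      Kyy *ᵥ y + ((1 - Kyy) * Kyw) *ᵥ w + (1 - Kyy) *ᵥ (Kyx *ᵥ ψx) := by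
  simp only [nextY, mulVec_sub, ← mulVec_mulVec, sub_mulVec, one_mulVec]
  abel

theorem hasQuadraticPart_bellmanG (hP : P.IsSymm) :
    HasQuadraticPart
      (bellmanG Kyy Kyx Kyw Qxx Qxy Qxw Qxu Qyx Qyy Qyw Qyu Qwx Qwy Qww Qwu
        Qux Quy Quw Quu cx cy cw cu c0 ψx ψu P p)
      ((2 : ℝ) • Qww + (2 : ℝ) • (Kywᵀ * (1 - Kyy)ᵀ * P * (1 - Kyy) * Kyw))
      (Qwy + Qywᵀ + (2 : ℝ) • (Kywᵀ * (1 - Kyy)ᵀ * P * Kyy))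
      (Kyyᵀ * P * Kyy + Qyy) := by
  obtain ⟨b, d, e, hnext⟩ := hasQuadraticPart_comp_affine hP p Kyy ((1 - Kyy) * Kyw)
    ((1 - Kyy) *ᵥ (Kyx *ᵥ ψx))
  refine ⟨Qxwᵀ *ᵥ ψx + Qwx *ᵥ ψx + Qwu *ᵥ ψu + Quwᵀ *ᵥ ψu + cw + b,
    Qxyᵀ *ᵥ ψx + Qyx *ᵥ ψx + Qyu *ᵥ ψu + Quyᵀ *ᵥ ψu + cy + d,
    ψx ⬝ᵥ Qxx *ᵥ ψx + ψx ⬝ᵥ Qxu *ᵥ ψu + ψu ⬝ᵥ Qux *ᵥ ψx + ψu ⬝ᵥ Quu *ᵥ ψu + cx ⬝ᵥ ψx +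
      cu ⬝ᵥ ψu + c0 + e, fun y w => ?_⟩
  beta_reduce at hnext
  rw [bellmanG, nextY_eq, add_assoc _ (_ ⬝ᵥ P *ᵥ _), hnext]
  simp only [transpose_mul, ← Matrix.mul_assoc, add_mulVec, smul_mulVec, dotProduct_add,
    dotProduct_smul, dotProduct_transpose_mulVec, dotProduct_comm y cy, dotProduct_comm w cw,
    smul_eq_mul]
  ring

theorem bellman_quadratic_part_general (hP : P.IsSymm)
    (Q : Matrix (Fin nw) (Fin nw) ℝ)
    (hQ : Q = (2 : ℝ) • Qww +
      (2 : ℝ) • (Kywᵀ * (1 - Kyy)ᵀ * P * (1 - Kyy) * Kyw))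
    (hQpos : Q.PosDef)
    (F : Matrix (Fin nw) (Fin ny) ℝ)
    (hF : F = Q⁻¹ * (Qwy + Qywᵀ + (2 : ℝ) • (Kywᵀ * (1 - Kyy)ᵀ * P * Kyy)))
    (Φ : (Fin ny → ℝ) → ℝ)
    (hΦ : ∀ py : Fin ny → ℝ,
      Φ py = ⨅ pw : Fin nw → ℝ,
        bellmanG Kyy Kyx Kyw Qxx Qxy Qxw Qxu Qyx Qyy Qyw Qyu Qwx Qwy Qww Qwu
          Qux Quy Quw Quu cx cy cw cu c0 ψx ψu P p py pw)
    (py : Fin ny → ℝ) :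
    Φ py + Φ (-py) - 2 * Φ 0 =
      2 * (py ⬝ᵥ (Kyyᵀ * P * Kyy - (1 / 2 : ℝ) • (Fᵀ * Q * F) + Qyy).mulVec py) := by
  subst hQ hF
  rw [hΦ, hΦ, hΦ, sub_add_eq_add_sub]
  exact (hasQuadraticPart_bellmanG (hP := hP) ..).second_difference_iInf hQpos py

end Bellman

/-- If `Q = 2Q_ww + 2K_ywᵀ(I − K_yy)ᵀ P (I − K_yy) K_yw` is
positive definite, `Φ(ψ_y) = min_{ψ_w} G(ψ_y, ψ_w)`, and `F = Q⁻¹ R` with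
`R = Q_wy + Q_ywᵀ + 2K_ywᵀ(I − K_yy)ᵀ P K_yy`, then for every `ψ_y`,
`Φ(ψ_y) + Φ(−ψ_y) − 2Φ(0) = 2 ψ_yᵀ (K_yyᵀ P K_yy − (1/2) Fᵀ Q F + Q_yy) ψ_y`:
the quadratic part of the minimized Bellman right-hand side is the Riccati
expression `K_yyᵀ P K_yy − (1/2) Fᵀ Q F + Q_yy`. -/
theorem bellman_quadratic_part {nx ny nw nu : ℕ}
    (Kyy : Matrix (Fin ny) (Fin ny) ℝ) (Kyx : Matrix (Fin ny) (Fin nx) ℝ)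
    (Kyw : Matrix (Fin ny) (Fin nw) ℝ)
    (Qxx : Matrix (Fin nx) (Fin nx) ℝ) (Qxy : Matrix (Fin nx) (Fin ny) ℝ)
    (Qxw : Matrix (Fin nx) (Fin nw) ℝ) (Qxu : Matrix (Fin nx) (Fin nu) ℝ)
    (Qyx : Matrix (Fin ny) (Fin nx) ℝ) (Qyy : Matrix (Fin ny) (Fin ny) ℝ)
    (Qyw : Matrix (Fin ny) (Fin nw) ℝ) (Qyu : Matrix (Fin ny) (Fin nu) ℝ)
    (Qwx : Matrix (Fin nw) (Fin nx) ℝ) (Qwy : Matrix (Fin nw) (Fin ny) ℝ)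
    (Qww : Matrix (Fin nw) (Fin nw) ℝ) (Qwu : Matrix (Fin nw) (Fin nu) ℝ)
    (Qux : Matrix (Fin nu) (Fin nx) ℝ) (Quy : Matrix (Fin nu) (Fin ny) ℝ)
    (Quw : Matrix (Fin nu) (Fin nw) ℝ) (Quu : Matrix (Fin nu) (Fin nu) ℝ)
    (cx : Fin nx → ℝ) (cy : Fin ny → ℝ) (cw : Fin nw → ℝ) (cu : Fin nu → ℝ)
    (c0 : ℝ) (ψx : Fin nx → ℝ) (ψu : Fin nu → ℝ)
    (P : Matrix (Fin ny) (Fin ny) ℝ) (p : Fin ny → ℝ)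
    (hQww : Qww.IsSymm) (hQyy : Qyy.IsSymm) (hP : P.IsSymm)
    (Q : Matrix (Fin nw) (Fin nw) ℝ)
    (hQ : Q = (2 : ℝ) • Qww +
      (2 : ℝ) • (Kywᵀ * (1 - Kyy)ᵀ * P * (1 - Kyy) * Kyw))
    (hQpos : Q.PosDef)
    (F : Matrix (Fin nw) (Fin ny) ℝ)
    (hF : F = Q⁻¹ * (Qwy + Qywᵀ + (2 : ℝ) • (Kywᵀ * (1 - Kyy)ᵀ * P * Kyy)))
    (Φ : (Fin ny → ℝ) → ℝ)
    (hΦ : ∀ py : Fin ny → ℝ,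
      Φ py = ⨅ pw : Fin nw → ℝ,
        bellmanG Kyy Kyx Kyw Qxx Qxy Qxw Qxu Qyx Qyy Qyw Qyu Qwx Qwy Qww Qwu
          Qux Quy Quw Quu cx cy cw cu c0 ψx ψu P p py pw) :
    ∀ py : Fin ny → ℝ,
      Φ py + Φ (-py) - 2 * Φ 0 =
        2 * (py ⬝ᵥ (Kyyᵀ * P * Kyy - (1 / 2 : ℝ) • (Fᵀ * Q * F) + Qyy).mulVec py) := by
  intro py
  exact bellman_quadratic_part_general (hP := hP) (hQ := hQ) (hQpos := hQpos) (hF := hF)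
    (hΦ := hΦ) ..
end
end
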